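/- arXiv:1010.3305 — 2 statements merged into one kernel-verified Lean document; each statement's English description precedes it below -/
import Mathlib

section
/- Fix an integer k ≥ 2 and a real α ≥ 0 (sub-exponential, polynomially decaying traffic rate). For each n ≥ 1, model the leaves of the depth-n rooted k-ary tree as functions from Fin n to Fin k with tree distance d(u,v) = 2(n − ℓ(u,v)), where ℓ(u,v) is the length of the longest common prefix, and take the traffic rate between leaves u and v to be (1 + d(u,v))^{−α}. Let P(n) = ( Σ_{(u,v): d(u,v)=2n} (1+d(u,v))^{−α} ) / ( Σ_{(u,v)} (1+d(u,v))^{−α} ), both sums over ordered pairs of leaves. Then P(n) → 1 − 1/k as n → ∞; in particular, polynomially decaying rate functions yield global traffic with asymptotic proportion 1 − 1/k through the root. -/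
open Filter

/-- The length of the longest common prefix of two leaves of the depth-`n`
rooted `k`-ary tree (leaves modeled as functions `Fin n → Fin k`):
the largest `j ≤ n` such that `u i = v i` for all `i < j`. -/
def prefLen {n k : ℕ} (u v : Fin n → Fin k) : ℕ :=
  Nat.findGreatest (fun j => ∀ i : Fin n, (i : ℕ) < j → u i = v i) n

/-- The tree distance between two leaves of the depth-`n` rooted `k`-ary tree:
`d(u,v) = 2 (n - ℓ(u,v))`. -/
def treeDist {n k : ℕ} (u v : Fin n → Fin k) : ℕ :=
  2 * (n - prefLen u v)

/-!
For `j ≥ 1`, any leaf has `(k - 1) k ^ (j - 1)` leaves at distance `2 j`. With a rate function `f`,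
each leaf therefore sends traffic `w j = (k - 1) k ^ (j - 1) f (2 j)` to distance `2 j`, and the
proportion through the root is the last term of `∑ j ≤ n, w j` divided by the sum. If
`f (2 (j + 1)) / f (2 j)` tends to `r`, then `w (j + 1) / w j` tends to `q = k r`. For `q > 1` the
partial sums of `w` then grow by the factor `q` as well, so the last term carries the proportion
`1 - 1 / q`. For polynomial decay `r = 1`.
-/

open Finset Asymptotics
open scoped Topology

section PartialSums

variable {w : ℕ → ℝ} {q : ℝ}

/- Summing `w (n + 1) - q * w n = o(w n)` telescopes to the same relation between partial sums. -/
lemma tendsto_sum_range_succ_div_sum_range (hw : 0 ≤ w) (hq : q ≠ 0)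
    (hratio : Tendsto (fun n ↦ w (n + 1) / w n) atTop (𝓝 q))
    (hdiv : Tendsto (fun n ↦ ∑ j ∈ range n, w j) atTop atTop) :
    Tendsto (fun n ↦ (∑ j ∈ range (n + 1), w j) / ∑ j ∈ range n, w j) atTop (𝓝 q) := by
  have hw_ne : ∀ᶠ n in atTop, w n ≠ 0 :=
    (hratio.eventually_ne hq).mono fun n hn h ↦ hn (by rw [h, div_zero])
  have hterm : (fun n ↦ w (n + 1) - q * w n) =o[atTop] w := by
    rw [isLittleO_iff_tendsto' (hw_ne.mono fun n hn h ↦ absurd h hn), ← sub_self q]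
    refine (hratio.sub_const q).congr' (hw_ne.mono fun n hn ↦ ?_)
    field_simp
  have hfirst : (fun _ ↦ w 0) =o[atTop] fun n ↦ ∑ j ∈ range n, w j :=
    isLittleO_const_left.2 (.inr (tendsto_norm_atTop_atTop.comp hdiv))
  have hsum : (fun n ↦ (∑ j ∈ range (n + 1), w j) - q * ∑ j ∈ range n, w j)
      =o[atTop] fun n ↦ ∑ j ∈ range n, w j := by
    refine ((hterm.sum_range hw hdiv).add hfirst).congr_left fun n ↦ ?_
    rw [sum_sub_distrib, ← mul_sum, sum_range_succ']
    ring
  have hlim := hsum.tendsto_div_nhds_zero.add_const q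
  rw [zero_add] at hlim
  refine hlim.congr' ((hdiv.eventually_ne_atTop 0).mono fun n hn ↦ ?_)
  field_simp
  ring

lemma tendsto_div_sum_range_succ (hw : 0 ≤ w) (hq : 1 < q)
    (hratio : Tendsto (fun n ↦ w (n + 1) / w n) atTop (𝓝 q)) :
    Tendsto (fun n ↦ w n / ∑ j ∈ range (n + 1), w j) atTop (𝓝 (1 - 1 / q)) := by
  have hratio_norm : Tendsto (fun n ↦ ‖w (n + 1)‖ / ‖w n‖) atTop (𝓝 q) :=
    hratio.congr fun n ↦ by rw [Real.norm_of_nonneg (hw _), Real.norm_of_nonneg (hw _)]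
  have hdiv : Tendsto (fun n ↦ ∑ j ∈ range n, w j) atTop atTop :=
    (not_summable_iff_tendsto_nat_atTop_of_nonneg hw).1
      (not_summable_of_ratio_test_tendsto_gt_one hq hratio_norm)
  have hq_ne : q ≠ 0 := (zero_lt_one.trans hq).ne'
  have hinv := (tendsto_sum_range_succ_div_sum_range hw hq_ne hratio hdiv).inv₀ hq_ne
  rw [one_div]
  refine (hinv.const_sub 1).congr' ?_
  filter_upwards [(hdiv.comp (tendsto_add_atTop_nat 1)).eventually_ne_atTop 0] with n hn
  have hsum_ne : ∑ j ∈ range (n + 1), w j ≠ 0 := hn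
  rw [inv_div, one_sub_div hsum_ne, sum_range_succ, add_sub_cancel_left]

end PartialSums

section Leaves

variable {n k : ℕ}

lemma le_prefLen_iff {u v : Fin n → Fin k} {j : ℕ} :
    j ≤ prefLen u v ↔ j ≤ n ∧ ∀ i : Fin n, (i : ℕ) < j → u i = v i := by
  refine ⟨fun hj ↦ ⟨hj.trans (Nat.findGreatest_le n), fun i hi ↦ ?_⟩,
    fun ⟨hjn, hj⟩ ↦ Nat.le_findGreatest hjn hj⟩
  have hspec := Nat.findGreatest_spec (P := fun j ↦ ∀ i : Fin n, (i : ℕ) < j → u i = v i)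
    (Nat.zero_le n) (fun i hi ↦ absurd hi (Nat.not_lt_zero _))
  exact hspec i (hi.trans_le hj)

lemma prefLen_cons_self (a : Fin k) (u v : Fin n → Fin k) :
    prefLen (Fin.cons a u : Fin (n + 1) → Fin k) (Fin.cons a v) = prefLen u v + 1 := by
  refine eq_of_forall_le_iff fun j ↦ ?_
  cases j with
  | zero => simp
  | succ j =>
    rw [Nat.add_le_add_iff_right, le_prefLen_iff, le_prefLen_iff]
    simp [Fin.forall_fin_succ]

lemma prefLen_cons_of_ne {a b : Fin k} (hab : a ≠ b) (u v : Fin n → Fin k) :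
    prefLen (Fin.cons a u : Fin (n + 1) → Fin k) (Fin.cons b v) = 0 := by
  by_contra hne
  exact hab ((le_prefLen_iff.1 (Nat.one_le_iff_ne_zero.2 hne)).2 0 one_pos)

lemma treeDist_cons_self (a : Fin k) (u v : Fin n → Fin k) :
    treeDist (Fin.cons a u : Fin (n + 1) → Fin k) (Fin.cons a v) = treeDist u v := by
  rw [treeDist, treeDist, prefLen_cons_self, Nat.add_sub_add_right]

lemma treeDist_cons_of_ne {a b : Fin k} (hab : a ≠ b) (u v : Fin n → Fin k) :
    treeDist (Fin.cons a u : Fin (n + 1) → Fin k) (Fin.cons b v) = 2 * (n + 1) := by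
  rw [treeDist, prefLen_cons_of_ne hab, Nat.sub_zero]

/-- The number of leaves at distance `2 * j` from a given leaf of the rooted `k`-ary tree, for `j`
at most the depth. -/
def leafSphereCard (k : ℕ) : ℕ → ℕ
  | 0 => 1
  | j + 1 => (k - 1) * k ^ j

lemma sum_pi_fin_succ {ι M : Type*} [Fintype ι] [AddCommMonoid M] (g : (Fin (n + 1) → ι) → M) :
    ∑ v, g v = ∑ b : ι, ∑ v : Fin n → ι, g (Fin.cons b v) := by
  rw [← Fintype.sum_prod_type']
  exact ((Fin.consEquiv fun _ ↦ ι).sum_comp g).symm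

lemma sum_treeDist {M : Type*} [AddCommMonoid M] (f : ℕ → M) (u : Fin n → Fin k) :
    ∑ v, f (treeDist u v) = ∑ j ∈ range (n + 1), leafSphereCard k j • f (2 * j) := by
  induction n with
  | zero => simp [treeDist, leafSphereCard]
  | succ n ih =>
    cases u using Fin.consCases with | _ a u
    have hother : ∀ b ∈ univ.erase a,
        ∑ v, f (treeDist (Fin.cons a u : Fin (n + 1) → Fin k) (Fin.cons b v))
          = k ^ n • f (2 * (n + 1)) := fun b hb ↦ by
      simp [treeDist_cons_of_ne (ne_of_mem_erase hb).symm]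
    rw [sum_pi_fin_succ, ← add_sum_erase _ _ (mem_univ a), sum_congr rfl hother,
      sum_range_succ _ (n + 1)]
    simp [treeDist_cons_self, ih, leafSphereCard, mul_smul]

end Leaves

/-- The proportion of the traffic between leaves of the depth-`n` rooted `k`-ary tree that passes
through the root, when leaves at distance `d` exchange traffic at rate `f d`. -/
noncomputable def rootTrafficProportion (k : ℕ) (f : ℕ → ℝ) (n : ℕ) : ℝ :=
  (∑ u : Fin n → Fin k, ∑ v : Fin n → Fin k,
      if treeDist u v = 2 * n then f (treeDist u v) else 0) /
    ∑ u : Fin n → Fin k, ∑ v : Fin n → Fin k, f (treeDist u v)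

lemma rootTrafficProportion_eq_div_sum_range {k : ℕ} (hk : k ≠ 0) (f : ℕ → ℝ) (n : ℕ) :
    rootTrafficProportion k f n =
      leafSphereCard k n * f (2 * n) / ∑ j ∈ range (n + 1), leafSphereCard k j * f (2 * j) := by
  have hroot (u : Fin n → Fin k) :
      (∑ v, if treeDist u v = 2 * n then f (treeDist u v) else 0)
        = leafSphereCard k n * f (2 * n) := by
    rw [sum_treeDist fun d ↦ if d = 2 * n then f d else 0]
    simp
  have hleaves : (k : ℝ) ^ n ≠ 0 := pow_ne_zero n (Nat.cast_ne_zero.2 hk)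
  simp [rootTrafficProportion, hroot, sum_treeDist, mul_div_mul_left _ _ hleaves]

lemma tendsto_leafSphereCard_ratio {k : ℕ} (hk : 2 ≤ k) :
    Tendsto (fun n ↦ (leafSphereCard k (n + 1) : ℝ) / leafSphereCard k n) atTop (𝓝 k) := by
  rw [← tendsto_add_atTop_iff_nat 1]
  refine tendsto_const_nhds.congr fun n ↦ ?_
  have hcard_ne : (leafSphereCard k (n + 1) : ℝ) ≠ 0 :=
    Nat.cast_ne_zero.2 (mul_ne_zero (by omega) (pow_ne_zero n (by omega)))
  rw [eq_div_iff hcard_ne]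
  norm_cast
  simp only [leafSphereCard]
  ring

theorem root_traffic_proportion_polynomial_decay_general {k : ℕ} (hk : 2 ≤ k) {f : ℕ → ℝ}
    (hf : 0 ≤ f) {r : ℝ} (hr : 1 < k * r)
    (hratio : Tendsto (fun n ↦ f (2 * (n + 1)) / f (2 * n)) atTop (𝓝 r)) :
    Tendsto (rootTrafficProportion k f) atTop (𝓝 (1 - 1 / (k * r))) := by
  have hweight_ratio := (tendsto_leafSphereCard_ratio hk).mul hratio
  simp only [div_mul_div_comm] at hweight_ratio
  have hweight : 0 ≤ fun j ↦ (leafSphereCard k j : ℝ) * f (2 * j) :=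
    fun j ↦ mul_nonneg (Nat.cast_nonneg _) (hf _)
  exact (tendsto_div_sum_range_succ hweight hr hweight_ratio).congr fun n ↦
    (rootTrafficProportion_eq_div_sum_range (by omega) f n).symm

lemma tendsto_add_const_rpow_div_rpow (c s : ℝ) :
    Tendsto (fun x : ℝ ↦ (x + c) ^ s / x ^ s) atTop (𝓝 1) := by
  have hbase : Tendsto (fun x : ℝ ↦ 1 + c / x) atTop (𝓝 1) := by
    simpa using (tendsto_id.const_div_atTop c).const_add 1
  have hpow := hbase.rpow_const (p := s) (.inl one_ne_zero)
  rw [Real.one_rpow] at hpow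
  refine hpow.congr' ?_
  filter_upwards [eventually_gt_atTop 0, eventually_ge_atTop (-c)] with x hx hxc
  rw [one_add_div hx.ne', Real.div_rpow (by linarith) hx.le]

lemma tendsto_one_add_two_mul_rpow_ratio (s : ℝ) :
    Tendsto (fun n : ℕ ↦ (1 + ((2 * (n + 1) : ℕ) : ℝ)) ^ s / (1 + ((2 * n : ℕ) : ℝ)) ^ s)
      atTop (𝓝 1) := by
  have hdist : Tendsto (fun n : ℕ ↦ 1 + ((2 * n : ℕ) : ℝ)) atTop atTop :=
    tendsto_atTop_add_const_left _ _ <| tendsto_natCast_atTop_atTop.comp <|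
      tendsto_id.const_mul_atTop' two_pos
  refine ((tendsto_add_const_rpow_div_rpow 2 s).comp hdist).congr fun n ↦ ?_
  simp only [Function.comp_apply, mul_add_one, Nat.cast_add, Nat.cast_ofNat, add_assoc]

theorem root_traffic_proportion_polynomial_decay (k : ℕ) (hk : 2 ≤ k)
    (α : ℝ) (hα : 0 ≤ α) :
    Tendsto
      (fun n : ℕ =>
        (∑ u : Fin n → Fin k, ∑ v : Fin n → Fin k,
            if treeDist u v = 2 * n
              then (1 + (treeDist u v : ℝ)) ^ (-α) else 0) /
        (∑ u : Fin n → Fin k, ∑ v : Fin n → Fin k,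
            (1 + (treeDist u v : ℝ)) ^ (-α)))
      atTop (nhds (1 - 1 / (k : ℝ))) := by
  have h := root_traffic_proportion_polynomial_decay_general hk (f := fun d ↦ (1 + (d : ℝ)) ^ (-α))
    (fun d ↦ by positivity) (by rwa [mul_one, Nat.one_lt_cast])
    (tendsto_one_add_two_mul_rpow_ratio (-α))
  rwa [mul_one] at h
end

section
/- Fix an integer k ≥ 2 and a real β with 1 < β and β² ≠ k. For each n ≥ 1 set P(n) = ( (k−1)·k^{n−1}·β^{−2n} ) / ( 1 + (β^{−2})·(k−1)·((k·β^{−2})^n − 1)/((k·β^{−2}) − 1) ). Then: if β ≥ √k (interpreting the denominator sum as 1 + n(k−1)/k when β² = k), lim_{n→∞} P(n) = 0; and if 1 < β < √k, lim_{n→∞} P(n) = 1 − β²/k. -/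
open Filter

/-- The closed-form proportion of traffic through the root of the depth-`n`
`k`-ary tree with traffic rate `β^{-p}` at tree distance `p`; when `β² = k`
the denominator sum is interpreted as `1 + n (k-1)/k`. -/
noncomputable def rootProportion (k : ℕ) (β : ℝ) (n : ℕ) : ℝ :=
  (((k : ℝ) - 1) * (k : ℝ) ^ (n - 1) * β ^ (-(2 * (n : ℤ)))) /
    (if β ^ 2 = (k : ℝ) then 1 + (n : ℝ) * ((k : ℝ) - 1) / (k : ℝ)
     else 1 + β ^ (-2 : ℤ) * ((k : ℝ) - 1) *
        (((k : ℝ) * β ^ (-2 : ℤ)) ^ n - 1) / ((k : ℝ) * β ^ (-2 : ℤ) - 1))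

/-!
Put `c = (k - 1) / k` and `y = β² / k`. Dividing the traffic through the root and the total traffic
by `(k β⁻²)ⁿ = y⁻ⁿ` reverses the geometric sum in the denominator and gives
`P(n) = c / (yⁿ + c (1 + y + ⋯ + yⁿ⁻¹))`. For `y ≥ 1` the denominator is at least `c n`, so
`P(n) → 0`, the critical case `y = 1` included; for `y < 1` it converges to `c / (1 - y)`, so
`P(n) → 1 - y`.
-/

section GeometricSum

open Finset Topology

lemma tendsto_div_pow_add_geom_sum_of_one_le {𝕜 : Type*} [Field 𝕜] [LinearOrder 𝕜]
    [IsStrictOrderedRing 𝕜] [Archimedean 𝕜] [TopologicalSpace 𝕜] [OrderTopology 𝕜]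
    (a : 𝕜) {c y : 𝕜} (hc : 0 < c) (hy : 1 ≤ y) :
    Tendsto (fun n : ℕ ↦ a / (y ^ n + c * ∑ i ∈ range n, y ^ i)) atTop (𝓝 0) := by
  refine Tendsto.const_div_atTop (tendsto_atTop_mono (fun n ↦ ?_)
    (tendsto_natCast_atTop_atTop.const_mul_atTop hc)) a
  have natCast_le_geom_sum : (n : 𝕜) ≤ ∑ i ∈ range n, y ^ i := by
    simpa using card_nsmul_le_sum (range n) (y ^ ·) 1 fun i _ ↦ one_le_pow₀ hy
  calc c * n ≤ c * ∑ i ∈ range n, y ^ i := by gcongr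
    _ ≤ y ^ n + c * ∑ i ∈ range n, y ^ i := le_add_of_nonneg_left (by positivity)

lemma tendsto_div_pow_add_geom_sum_of_norm_lt_one {K : Type*} [NormedField K] {c y : K}
    (hc : c ≠ 0) (hy : ‖y‖ < 1) :
    Tendsto (fun n : ℕ ↦ c / (y ^ n + c * ∑ i ∈ range n, y ^ i)) atTop (𝓝 (1 - y)) := by
  have one_sub_ne_zero : 1 - y ≠ 0 := sub_ne_zero.2 fun h ↦ by simp [← h] at hy
  have tendsto_denom : Tendsto (fun n : ℕ ↦ y ^ n + c * ∑ i ∈ range n, y ^ i) atTop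
      (𝓝 (0 + c * (1 - y)⁻¹)) :=
    (tendsto_pow_atTop_nhds_zero_of_norm_lt_one hy).add
      ((hasSum_geometric_of_norm_lt_one hy).tendsto_sum_nat.const_mul c)
  have limit_eq : c / (0 + c * (1 - y)⁻¹) = 1 - y := by
    rw [zero_add, div_mul_cancel_left₀ hc, inv_inv]
  rw [← limit_eq]
  exact tendsto_const_nhds.div tendsto_denom (by simp [hc, one_sub_ne_zero])

lemma pow_mul_one_add_mul_sum_inv_pow_succ {K : Type*} [Field K] (c : K) {y : K} (hy : y ≠ 0)
    (n : ℕ) :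
    y ^ n * (1 + c * ∑ i ∈ range n, y⁻¹ ^ (i + 1)) = y ^ n + c * ∑ i ∈ range n, y ^ i := by
  have reverse_sum : y ^ n * ∑ i ∈ range n, y⁻¹ ^ (i + 1) = ∑ i ∈ range n, y ^ i := by
    rw [mul_sum, ← sum_range_reflect (y ^ ·)]
    refine sum_congr rfl fun i hi ↦ ?_
    rw [inv_pow, ← pow_sub₀ y hy (mem_range.1 hi), Nat.sub_sub, add_comm]
  linear_combination c * reverse_sum

end GeometricSum

section Traffic

open Finset Topology

/-- The traffic per leaf through the root of the depth-`n` `k`-ary tree, exchanged with the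
`(k - 1) k ^ (n - 1)` leaves at distance `2 n`. Only `n ≥ 1` is meaningful: at `n = 0` truncated
subtraction gives the value `k - 1`. -/
noncomputable def rootTraffic (k : ℕ) (β : ℝ) (n : ℕ) : ℝ :=
  ((k : ℝ) - 1) * (k : ℝ) ^ (n - 1) * β ^ (-(2 * (n : ℤ)))

/-- The total traffic per leaf of the depth-`n` `k`-ary tree: the leaf itself contributes `1`, and
each of the `(k - 1) k ^ i` leaves at distance `2 (i + 1)` from it `β ^ (-2 (i + 1))`. -/
noncomputable def totalTraffic (k : ℕ) (β : ℝ) (n : ℕ) : ℝ :=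
  1 + ((k : ℝ) - 1) * ∑ i ∈ range n, (k : ℝ) ^ i * β ^ (-(2 * ((i + 1 : ℕ) : ℤ)))

lemma pow_mul_zpow_neg_two_mul_succ {K : Type*} [Field K] {a : K} (ha : a ≠ 0) (b : K) (m : ℕ) :
    a ^ m * b ^ (-(2 * ((m + 1 : ℕ) : ℤ))) = (b ^ 2 / a)⁻¹ ^ (m + 1) / a := by
  have zpow_eq : b ^ (-(2 * ((m + 1 : ℕ) : ℤ))) = (b ^ 2)⁻¹ ^ (m + 1) := by
    rw [zpow_neg, zpow_mul, zpow_natCast, inv_pow, zpow_ofNat]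
  rw [zpow_eq, inv_div, div_eq_mul_inv a, mul_pow, pow_succ a, mul_right_comm,
    mul_div_cancel_right₀ _ ha]

variable {k : ℕ} {β : ℝ} {n : ℕ}

lemma rootTraffic_eq_mul_inv_pow (hk : k ≠ 0) (β : ℝ) (hn : n ≠ 0) :
    rootTraffic k β n = ((k : ℝ) - 1) / k * (β ^ 2 / k)⁻¹ ^ n := by
  obtain ⟨m, rfl⟩ := Nat.exists_eq_add_one_of_ne_zero hn
  rw [rootTraffic, Nat.add_sub_cancel, mul_assoc,
    pow_mul_zpow_neg_two_mul_succ (Nat.cast_ne_zero.2 hk)]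
  ring

lemma totalTraffic_eq_one_add_mul_sum_inv_pow (hk : k ≠ 0) (β : ℝ) (n : ℕ) :
    totalTraffic k β n = 1 + ((k : ℝ) - 1) / k * ∑ i ∈ range n, (β ^ 2 / k)⁻¹ ^ (i + 1) := by
  have cast_k_ne_zero : (k : ℝ) ≠ 0 := Nat.cast_ne_zero.2 hk
  simp only [totalTraffic, pow_mul_zpow_neg_two_mul_succ cast_k_ne_zero, ← sum_div]
  ring

lemma rootProportion_eq_rootTraffic_div_totalTraffic (hk : k ≠ 0) (β : ℝ) (n : ℕ) :
    rootProportion k β n = rootTraffic k β n / totalTraffic k β n := by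
  rw [rootProportion, rootTraffic, totalTraffic_eq_one_add_mul_sum_inv_pow hk]
  congr 1
  split_ifs with hβ
  · have ratio_eq_one : β ^ 2 / k = 1 := (div_eq_one_iff_eq (Nat.cast_ne_zero.2 hk)).2 hβ
    simp only [ratio_eq_one, inv_one, one_pow, sum_const, card_range, nsmul_one]
    ring
  · have zpow_eq : β ^ (-2 : ℤ) = (β ^ 2)⁻¹ := zpow_neg β 2
    have ratio_ne_one : (k : ℝ) * β ^ (-2 : ℤ) ≠ 1 := fun h ↦
      hβ (eq_of_mul_inv_eq_one (zpow_eq ▸ h)).symm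
    rw [mul_div_assoc, ← geom_sum_eq ratio_ne_one n]
    simp only [pow_succ', ← mul_sum, inv_div, zpow_eq, div_eq_mul_inv (k : ℝ)]
    field_simp

lemma rootProportion_eq_div_pow_add_geom_sum (hk : k ≠ 0) (hβ : β ≠ 0) (hn : n ≠ 0) :
    rootProportion k β n = ((k : ℝ) - 1) / k /
      ((β ^ 2 / k) ^ n + ((k : ℝ) - 1) / k * ∑ i ∈ range n, (β ^ 2 / k) ^ i) := by
  have ratio_ne_zero : β ^ 2 / k ≠ 0 := by positivity
  have ratio_pow_ne_zero : (β ^ 2 / k) ^ n ≠ 0 := by positivity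
  rw [rootProportion_eq_rootTraffic_div_totalTraffic hk, rootTraffic_eq_mul_inv_pow hk β hn,
    totalTraffic_eq_one_add_mul_sum_inv_pow hk, ← mul_div_mul_left _ _ ratio_pow_ne_zero,
    pow_mul_one_add_mul_sum_inv_pow_succ _ ratio_ne_zero, mul_left_comm, ← mul_pow,
    mul_inv_cancel₀ ratio_ne_zero, one_pow, mul_one]

end Traffic

theorem rootProportion_limits_general (k : ℕ) (hk : 2 ≤ k) (β : ℝ) (hβ : β ≠ 0) :
    (Real.sqrt k ≤ |β| → Tendsto (rootProportion k β) atTop (nhds 0)) ∧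
    (|β| < Real.sqrt k → Tendsto (rootProportion k β) atTop (nhds (1 - β ^ 2 / (k : ℝ)))) := by
  have one_lt_k : (1 : ℝ) < k := by exact_mod_cast hk
  have k_pos : (0 : ℝ) < k := one_pos.trans one_lt_k
  have c_pos : 0 < ((k : ℝ) - 1) / k := div_pos (sub_pos.2 one_lt_k) k_pos
  have eventually_eq := (eventually_ne_atTop 0).mono fun n hn ↦
    (rootProportion_eq_div_pow_add_geom_sum (by omega : k ≠ 0) hβ hn).symm
  refine ⟨fun h ↦ ?_, fun h ↦ ?_⟩
  · have one_le_ratio : 1 ≤ β ^ 2 / k := by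
      rwa [one_le_div k_pos, ← sq_abs, ← Real.sqrt_le_left (abs_nonneg β)]
    exact (tendsto_div_pow_add_geom_sum_of_one_le _ c_pos one_le_ratio).congr' eventually_eq
  · have ratio_lt_one : β ^ 2 / k < 1 := by
      rwa [div_lt_one k_pos, ← sq_abs, ← Real.lt_sqrt (abs_nonneg β)]
    have norm_ratio_lt_one : ‖β ^ 2 / (k : ℝ)‖ < 1 := by
      rwa [Real.norm_of_nonneg (by positivity)]
    exact (tendsto_div_pow_add_geom_sum_of_norm_lt_one c_pos.ne' norm_ratio_lt_one).congr'
      eventually_eq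

theorem rootProportion_limits (k : ℕ) (hk : 2 ≤ k) (β : ℝ) (hβ : 1 < β) :
    (Real.sqrt k ≤ β →
      Tendsto (rootProportion k β) atTop (nhds 0)) ∧
    (β < Real.sqrt k →
      Tendsto (rootProportion k β) atTop (nhds (1 - β ^ 2 / (k : ℝ)))) := by
  have β_pos : 0 < β := one_pos.trans hβ
  simpa only [abs_of_pos β_pos] using rootProportion_limits_general k hk β β_pos.ne'
end
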